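/- A ρ-maximal-correlation secure cipher is (t,ε)-entropically secure with ε = 2^{(n−t)/2}·ρ, with min-entropy replaced by Rényi entropy: if ρ_m(M;C) ≤ ρ when M is uniform on [1:2ⁿ], then for any pmf p̂ with H₂(p̂) ≥ t and any guess f̃: 𝒞 → ℕ, there exists a random variable F̃ independent of M (namely F̃ distributed as f̃(C) under the uniform-message law) such that for every f: [1:2ⁿ] → ℕ, |ℙ̂{f(M)=f̃(C)} − ℙ̂{f(M)=F̃}| ≤ 2^{(n−t)/2}·ρ. -/

import Mathlib

/-! Let `M` be uniform and let `w` be the density of `p̂` with respect to the uniform law, so that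
`ℙ̂{f(M) = f̃(C)} = E[w(M) 1{f(M) = f̃(C)}]` and `E[w(M)²] = |M| 2^{-H₂(p̂)}`. Splitting by the
common value `i`, the quantity to bound is the sum over `i` of the covariances of
`w(M) 1{f(M) = i}` and `1{f̃(C) = i}`. Each is at most the maximal correlation times the product of
the two `L²` norms, and by Cauchy–Schwarz these products add up to at most `E[w(M)²]^{1/2}`, because
the indicators of the events `f̃(C) = i` have squares summing to at most one. -/

open BigOperators Finset
open scoped Classical

/-- Hirschfeld–Gebelein–Rényi maximal correlation of a joint pmf `p` on `X × Y`:
the supremum of `E[f(X) g(Y)]` over zero-mean, unit-second-moment `f`, `g`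
(`sSup ∅ = 0` if no such functions exist). -/
noncomputable def maxCorr {X Y : Type*} [Fintype X] [Fintype Y] (p : X → Y → ℝ) : ℝ :=
  sSup {r : ℝ | ∃ f : X → ℝ, ∃ g : Y → ℝ,
    (∑ x, ∑ y, p x y * f x) = 0 ∧
    (∑ x, ∑ y, p x y * g y) = 0 ∧
    (∑ x, ∑ y, p x y * (f x) ^ 2) = 1 ∧
    (∑ x, ∑ y, p x y * (g y) ^ 2) = 1 ∧
    r = ∑ x, ∑ y, p x y * f x * g y}

/-- Spectral (operator) norm of a real matrix. -/
noncomputable def specNorm {X Y : Type*} [Fintype X] [Fintype Y] (B : Matrix X Y ℝ) : ℝ :=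
  sSup {r : ℝ | ∃ v : Y → ℝ, (∑ y, (v y) ^ 2) = 1 ∧
    r = Real.sqrt (∑ x, (B.mulVec v x) ^ 2)}

section JointExpect

variable {X Y : Type*} [Fintype X] [Fintype Y]

/-- The expectation of `h(X, Y)` under the weights `p`, bundled as a linear functional of `h`.
A function of one variable is passed as `fun x _ => u x` or `fun _ y => v y`. -/
noncomputable def jointExpect (p : X → Y → ℝ) : (X → Y → ℝ) →ₗ[ℝ] ℝ where
  toFun h := ∑ x, ∑ y, p x y * h x y
  map_add' g h := by simp only [Pi.add_apply, mul_add, sum_add_distrib]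
  map_smul' a h := by
    simp only [Pi.smul_apply, smul_eq_mul, mul_sum, mul_left_comm, RingHom.id_apply]

/-- `p` is a joint probability mass function on `X × Y`, curried to match `maxCorr`. -/
structure IsJointPmf (p : X → Y → ℝ) : Prop where
  nonneg : ∀ x y, 0 ≤ p x y
  sum_eq_one : ∑ x, ∑ y, p x y = 1

variable {p : X → Y → ℝ}

lemma jointExpect_apply (h : X → Y → ℝ) : jointExpect p h = ∑ x, ∑ y, p x y * h x y := rfl

lemma jointExpect_const_mul (a : ℝ) (h : X → Y → ℝ) :
    jointExpect p (fun x y => a * h x y) = a * jointExpect p h :=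
  map_smul (jointExpect p) a h

lemma jointExpect_sum {ι : Type*} (s : Finset ι) (h : ι → X → Y → ℝ) :
    jointExpect p (fun x y => ∑ i ∈ s, h i x y) = ∑ i ∈ s, jointExpect p (h i) := by
  rw [← map_sum]
  exact congrArg _ (funext₂ fun x y => by simp only [Finset.sum_apply])

lemma jointExpect_const (hp : IsJointPmf p) (a : ℝ) : jointExpect p (fun _ _ => a) = a := by
  simp only [jointExpect_apply, ← sum_mul, hp.sum_eq_one, one_mul]

lemma jointExpect_mono (hp : ∀ x y, 0 ≤ p x y) : Monotone (jointExpect p) := fun _ _ hgh =>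
  sum_le_sum fun x _ => sum_le_sum fun y _ => mul_le_mul_of_nonneg_left (hgh x y) (hp x y)

lemma jointExpect_sq_nonneg (hp : ∀ x y, 0 ≤ p x y) (h : X → Y → ℝ) :
    0 ≤ jointExpect p fun x y => h x y ^ 2 :=
  sum_nonneg fun x _ => sum_nonneg fun y _ => mul_nonneg (hp x y) (sq_nonneg _)

lemma abs_jointExpect_mul_le (hp : ∀ x y, 0 ≤ p x y) (g h : X → Y → ℝ) :
    |jointExpect p fun x y => g x y * h x y| ≤
      √(jointExpect p fun x y => g x y ^ 2) * √(jointExpect p fun x y => h x y ^ 2) := by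
  rw [← Real.sqrt_mul (jointExpect_sq_nonneg hp g)]
  refine Real.abs_le_sqrt ?_
  simp only [jointExpect_apply, ← Fintype.sum_prod_type']
  refine sum_sq_le_sum_mul_sum_of_sq_le_mul _ (fun z _ => ?_) (fun z _ => ?_)
    fun z _ => (by ring : _ = _).le
  all_goals exact mul_nonneg (hp _ _) (sq_nonneg _)

lemma jointExpect_sub_mean (hp : IsJointPmf p) (h : X → Y → ℝ) :
    jointExpect p (fun x y => h x y - jointExpect p h) = 0 :=
  (map_sub (jointExpect p) h fun _ _ => jointExpect p h).trans
    (by rw [jointExpect_const hp, sub_self])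

lemma jointExpect_sub_mean_mul_sub_mean (hp : IsJointPmf p) (g h : X → Y → ℝ) :
    jointExpect p (fun x y => (g x y - jointExpect p g) * (h x y - jointExpect p h)) =
      jointExpect p (fun x y => g x y * h x y) - jointExpect p g * jointExpect p h := by
  have expand : (fun x y => (g x y - jointExpect p g) * (h x y - jointExpect p h)) =
      (fun x y => g x y * h x y) - jointExpect p h • g
        - jointExpect p g • fun x y => h x y - jointExpect p h := by
    ext x y
    simp only [Pi.sub_apply, Pi.smul_apply, smul_eq_mul]
    ring
  rw [expand, map_sub, map_sub, map_smul, map_smul, jointExpect_sub_mean hp, smul_zero, sub_zero,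
    smul_eq_mul, mul_comm]

lemma jointExpect_sub_mean_sq_le (hp : IsJointPmf p) (h : X → Y → ℝ) :
    jointExpect p (fun x y => (h x y - jointExpect p h) ^ 2) ≤
      jointExpect p fun x y => h x y ^ 2 := by
  simp only [sq]
  rw [jointExpect_sub_mean_mul_sub_mean hp]
  exact sub_le_self _ (mul_self_nonneg _)

end JointExpect

section MaxCorr

variable {X Y : Type*} [Fintype X] [Fintype Y] {p : X → Y → ℝ}

lemma jointExpect_mul_le_maxCorr (hp : ∀ x y, 0 ≤ p x y) {u : X → ℝ} {v : Y → ℝ}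
    (hu : jointExpect p (fun x _ => u x) = 0) (hv : jointExpect p (fun _ y => v y) = 0)
    (hu2 : jointExpect p (fun x _ => u x ^ 2) = 1) (hv2 : jointExpect p (fun _ y => v y ^ 2) = 1) :
    jointExpect p (fun x y => u x * v y) ≤ maxCorr p := by
  refine le_csSup ⟨1, ?_⟩ ⟨u, v, hu, hv, hu2, hv2, by simp only [jointExpect_apply, mul_assoc]⟩
  rintro _ ⟨f, g, -, -, hf2, hg2, rfl⟩
  have cauchySchwarz := (le_abs_self _).trans
    (abs_jointExpect_mul_le hp (fun x _ => f x) (fun _ y => g y))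
  simpa [jointExpect_apply, hf2, hg2, ← mul_assoc] using cauchySchwarz

lemma abs_jointExpect_mul_le_maxCorr (hp : ∀ x y, 0 ≤ p x y) {u : X → ℝ} {v : Y → ℝ}
    (hu : jointExpect p (fun x _ => u x) = 0) (hv : jointExpect p (fun _ y => v y) = 0)
    (hu2 : jointExpect p (fun x _ => u x ^ 2) = 1) (hv2 : jointExpect p (fun _ y => v y ^ 2) = 1) :
    |jointExpect p (fun x y => u x * v y)| ≤ maxCorr p := by
  refine abs_le'.2 ⟨jointExpect_mul_le_maxCorr hp hu hv hu2 hv2, ?_⟩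
  have hneg := jointExpect_mul_le_maxCorr hp (u := -u)
    ((map_neg (jointExpect p) fun x _ => u x).trans (by rw [hu, neg_zero])) hv
    (by simpa using hu2) hv2
  simpa [jointExpect_apply] using hneg

lemma maxCorr_nonneg (hp : ∀ x y, 0 ≤ p x y) : 0 ≤ maxCorr p := by
  by_cases h : ∃ (u : X → ℝ) (v : Y → ℝ),
      jointExpect p (fun x _ => u x) = 0 ∧ jointExpect p (fun _ y => v y) = 0 ∧
      jointExpect p (fun x _ => u x ^ 2) = 1 ∧ jointExpect p (fun _ y => v y ^ 2) = 1
  · obtain ⟨u, v, hu, hv, hu2, hv2⟩ := h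
    exact (abs_nonneg _).trans (abs_jointExpect_mul_le_maxCorr hp hu hv hu2 hv2)
  · refine Real.sSup_nonneg ?_
    rintro _ ⟨u, v, hu, hv, hu2, hv2, -⟩
    exact absurd ⟨u, v, hu, hv, hu2, hv2⟩ h

lemma abs_jointExpect_mul_le_maxCorr_mul (hp : ∀ x y, 0 ≤ p x y) {u : X → ℝ} {v : Y → ℝ}
    (hu : jointExpect p (fun x _ => u x) = 0) (hv : jointExpect p (fun _ y => v y) = 0) :
    |jointExpect p (fun x y => u x * v y)| ≤ maxCorr p *
      (√(jointExpect p fun x _ => u x ^ 2) * √(jointExpect p fun _ y => v y ^ 2)) := by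
  set a := √(jointExpect p fun x _ => u x ^ 2)
  set b := √(jointExpect p fun _ y => v y ^ 2)
  have cauchySchwarz : |jointExpect p (fun x y => u x * v y)| ≤ a * b :=
    abs_jointExpect_mul_le hp (fun x _ => u x) (fun _ y => v y)
  have ha2 : a ^ 2 = jointExpect p fun x _ => u x ^ 2 :=
    Real.sq_sqrt (jointExpect_sq_nonneg hp fun x _ => u x)
  have hb2 : b ^ 2 = jointExpect p fun _ y => v y ^ 2 :=
    Real.sq_sqrt (jointExpect_sq_nonneg hp fun _ y => v y)
  rcases eq_or_ne (a * b) 0 with hab | hab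
  · simpa [hab] using cauchySchwarz
  obtain ⟨ha0, hb0⟩ := mul_ne_zero_iff.1 hab
  have normalized : |jointExpect p (fun x y => (a⁻¹ * u x) * (b⁻¹ * v y))| ≤ maxCorr p := by
    refine abs_jointExpect_mul_le_maxCorr hp ?_ ?_ ?_ ?_
    · rw [jointExpect_const_mul, hu, mul_zero]
    · rw [jointExpect_const_mul, hv, mul_zero]
    · simp only [mul_pow]
      rw [jointExpect_const_mul, ← ha2, ← mul_pow, inv_mul_cancel₀ ha0, one_pow]
    · simp only [mul_pow]
      rw [jointExpect_const_mul, ← hb2, ← mul_pow, inv_mul_cancel₀ hb0, one_pow]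
  have rescale : jointExpect p (fun x y => (a⁻¹ * u x) * (b⁻¹ * v y)) =
      (a * b)⁻¹ * jointExpect p (fun x y => u x * v y) := by
    rw [← jointExpect_const_mul]
    congr! 3
    ring
  have hab_pos : 0 < a * b := lt_of_le_of_ne (by positivity) hab.symm
  rwa [rescale, abs_mul, abs_inv, abs_of_pos hab_pos, inv_mul_le_iff₀' hab_pos] at normalized

lemma abs_covariance_le_maxCorr_mul (hp : IsJointPmf p) (u : X → ℝ) (v : Y → ℝ) :
    |jointExpect p (fun x y => u x * v y) -
        jointExpect p (fun x _ => u x) * jointExpect p (fun _ y => v y)| ≤ maxCorr p *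
      (√(jointExpect p fun x _ => u x ^ 2) * √(jointExpect p fun _ y => v y ^ 2)) := by
  rw [← jointExpect_sub_mean_mul_sub_mean hp (fun x _ => u x) fun _ y => v y]
  refine (abs_jointExpect_mul_le_maxCorr_mul hp.nonneg
    (jointExpect_sub_mean hp fun x _ => u x) (jointExpect_sub_mean hp fun _ y => v y)).trans ?_
  have := maxCorr_nonneg hp.nonneg
  gcongr
  · exact jointExpect_sub_mean_sq_le hp fun x _ => u x
  · exact jointExpect_sub_mean_sq_le hp fun _ y => v y

lemma abs_sum_covariance_le_maxCorr_mul (hp : IsJointPmf p) {ι : Type*} (s : Finset ι)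
    (u : ι → X → ℝ) (v : ι → Y → ℝ) :
    |∑ i ∈ s, (jointExpect p (fun x y => u i x * v i y) -
        jointExpect p (fun x _ => u i x) * jointExpect p (fun _ y => v i y))| ≤ maxCorr p *
      (√(jointExpect p fun x _ => ∑ i ∈ s, u i x ^ 2) *
        √(jointExpect p fun _ y => ∑ i ∈ s, v i y ^ 2)) :=
  calc _ ≤ ∑ i ∈ s, maxCorr p * (√(jointExpect p fun x _ => u i x ^ 2) *
          √(jointExpect p fun _ y => v i y ^ 2)) :=
        (abs_sum_le_sum_abs _ _).trans
          (sum_le_sum fun i _ => abs_covariance_le_maxCorr_mul hp (u i) (v i))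
    _ = maxCorr p * ∑ i ∈ s, √(jointExpect p fun x _ => u i x ^ 2) *
          √(jointExpect p fun _ y => v i y ^ 2) := (mul_sum ..).symm
    _ ≤ _ := by
        rw [jointExpect_sum, jointExpect_sum]
        exact mul_le_mul_of_nonneg_left (Real.sum_sqrt_mul_sqrt_le s
          (fun i => jointExpect_sq_nonneg hp.nonneg fun x _ => u i x)
          (fun i => jointExpect_sq_nonneg hp.nonneg fun _ y => v i y)) (maxCorr_nonneg hp.nonneg)

/-- The paper's bound `ρ_m √(χ²(p̂‖p) + 1)` for a reweighting of the law of `X`: here `w` is the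
likelihood ratio, so that `E[w(X)²] = χ²(p̂‖p) + 1`. -/
lemma abs_jointExpect_guess_sub_le (hp : IsJointPmf p) {ι : Type*} [DecidableEq ι] (w : X → ℝ)
    (f : X → ι) (g : Y → ι) :
    |jointExpect p (fun x y => w x * if f x = g y then 1 else 0) -
        jointExpect p (fun x _ => w x * jointExpect p (fun _ y => if g y = f x then 1 else 0))| ≤
      maxCorr p * √(jointExpect p fun x _ => w x ^ 2) := by
  set u : ι → X → ℝ := fun i x => if f x = i then w x else 0 with hu
  set v : ι → Y → ℝ := fun i y => if g y = i then 1 else 0 with hv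
  have split_prob : jointExpect p (fun x y => w x * if f x = g y then 1 else 0) =
      ∑ i ∈ univ.image f, jointExpect p fun x y => u i x * v i y := by
    rw [← jointExpect_sum]
    congr! 4 with x y
    simp only [hu, hv, ite_mul, zero_mul, sum_ite_eq, mem_image_of_mem f (mem_univ x), if_true,
      eq_comm (a := g y)]
  have split_mean : jointExpect p (fun x _ => w x * jointExpect p fun _ y => v (f x) y) =
      ∑ i ∈ univ.image f, jointExpect p (fun x _ => u i x) * jointExpect p fun _ y => v i y := by
    simp only [mul_comm _ (jointExpect p fun _ y => v _ y), ← jointExpect_const_mul]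
    rw [← jointExpect_sum]
    congr! 4 with x
    simp [hu]
  have norm_left (x : X) : ∑ i ∈ univ.image f, u i x ^ 2 = w x ^ 2 := by
    simp [hu]
  have norm_right : (jointExpect p fun _ y => ∑ i ∈ univ.image f, v i y ^ 2) ≤ 1 := by
    refine (jointExpect_mono hp.nonneg fun _ y => ?_).trans_eq (jointExpect_const hp 1)
    simp only [hv, ite_pow, one_pow, ne_eq, two_ne_zero, not_false_eq_true, zero_pow, sum_ite_eq]
    split_ifs <;> norm_num
  rw [split_prob, split_mean, ← sum_sub_distrib]
  refine (abs_sum_covariance_le_maxCorr_mul hp _ u v).trans ?_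
  simp only [norm_left]
  exact mul_le_mul_of_nonneg_left
    (mul_le_of_le_one_right (Real.sqrt_nonneg _) (Real.sqrt_le_one.2 norm_right))
    (maxCorr_nonneg hp.nonneg)

end MaxCorr

lemma tsum_fiber_sum_mul {α ι : Type*} [Fintype α] [DecidableEq ι] (a : α → ℝ) (f : α → ι)
    (q : ι → ℝ) :
    ∑' i, (∑ x, if f x = i then a x else 0) * q i = ∑ x, a x * q (f x) := by
  have hterm (x : α) :
      HasSum (fun i => (if f x = i then a x else 0) * q i) (a x * q (f x)) := by
    simpa using hasSum_single (f := fun i => (if f x = i then a x else 0) * q i) (f x)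
      fun i hi => by simp [hi.symm]
  simpa only [sum_mul] using (hasSum_sum fun x _ => hterm x).tsum_eq

lemma sqrt_mul_le_two_rpow {N S t : ℝ} (hN : 0 < N) (hS : 0 < S) (ht : t ≤ -Real.logb 2 S) :
    √(N * S) ≤ 2 ^ ((Real.logb 2 N - t) / 2) := by
  have hpow : N * S ≤ 2 ^ (Real.logb 2 N - t) := by
    rw [← Real.logb_le_iff_le_rpow one_lt_two (mul_pos hN hS), Real.logb_mul hN.ne' hS.ne']
    linarith
  calc √(N * S) ≤ √(2 ^ (Real.logb 2 N - t)) := Real.sqrt_le_sqrt hpow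
    _ = 2 ^ ((Real.logb 2 N - t) / 2) := by
      rw [Real.sqrt_eq_rpow, ← Real.rpow_mul zero_le_two, mul_one_div]

section Cipher

variable {M C K : Type*}

/-- The conditional law of the ciphertext given the message, for the cipher `E` with a uniformly
distributed key. -/
noncomputable def cipherChannel [Fintype K] (E : K → M → C) (m : M) (c : C) : ℝ :=
  (Fintype.card K : ℝ)⁻¹ * ((univ.filter fun k => E k m = c).card : ℝ)

lemma cipherChannel_nonneg [Fintype K] (E : K → M → C) (m : M) (c : C) :
    0 ≤ cipherChannel E m c := by
  unfold cipherChannel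
  positivity

lemma sum_cipherChannel [Fintype C] [Fintype K] [Nonempty K] (E : K → M → C) (m : M) :
    ∑ c, cipherChannel E m c = 1 := by
  have hcard : ∑ c, (univ.filter fun k => E k m = c).card = Fintype.card K :=
    (card_eq_sum_card_fiberwise fun _ _ => mem_coe.2 (mem_univ _)).symm
  simp only [cipherChannel, ← mul_sum, ← Nat.cast_sum, hcard]
  exact inv_mul_cancel₀ (Nat.cast_ne_zero.2 Fintype.card_ne_zero)

variable [Fintype M] [Fintype C] {W : M → C → ℝ}

lemma isJointPmf_uniform_mul [Nonempty M] (hW : ∀ m c, 0 ≤ W m c) (hW1 : ∀ m, ∑ c, W m c = 1) :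
    IsJointPmf fun m c => (Fintype.card M : ℝ)⁻¹ * W m c where
  nonneg m c := mul_nonneg (by positivity) (hW m c)
  sum_eq_one := by simp [← mul_sum, hW1]

lemma jointExpect_uniform_density_mul (a : M → ℝ) (h : M → C → ℝ) :
    jointExpect (fun m c => (Fintype.card M : ℝ)⁻¹ * W m c)
        (fun m c => Fintype.card M * a m * h m c) = ∑ m, ∑ c, a m * W m c * h m c := by
  refine sum_congr rfl fun m _ => sum_congr rfl fun c _ => ?_
  have : Nonempty M := ⟨m⟩
  field_simp

lemma jointExpect_uniform_density_mul_fst (hW1 : ∀ m, ∑ c, W m c = 1) (a u : M → ℝ) :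
    jointExpect (fun m c => (Fintype.card M : ℝ)⁻¹ * W m c)
        (fun m _ => Fintype.card M * a m * u m) = ∑ m, a m * u m := by
  rw [jointExpect_uniform_density_mul]
  simp only [← sum_mul, ← mul_sum, hW1, mul_one]

end Cipher

theorem stmt18_general {M C ι : Type*} [Fintype M] [Fintype C] [DecidableEq ι]
    {W : M → C → ℝ} (hW : ∀ m c, 0 ≤ W m c) (hW1 : ∀ m, ∑ c, W m c = 1) (ρ : ℝ)
    (hρ : maxCorr (fun m c => (Fintype.card M : ℝ)⁻¹ * W m c) ≤ ρ)
    (phat : M → ℝ) (hphat : phat ≠ 0)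
    (t : ℝ) (ht : t ≤ -Real.logb 2 (∑ m, phat m ^ 2)) (ftilde : C → ι) :
    ∃ q : ι → ℝ,
      (∀ i, q i = ∑ m, ∑ c, if ftilde c = i then (Fintype.card M : ℝ)⁻¹ * W m c else 0) ∧
      ∀ f : M → ι,
        |(∑ m, ∑ c, phat m * W m c * if f m = ftilde c then 1 else 0) -
          ∑' i, (∑ m, if f m = i then phat m else 0) * q i| ≤
        2 ^ ((Real.logb 2 (Fintype.card M) - t) / 2) * ρ := by
  obtain ⟨m₀, hm₀⟩ : ∃ m, phat m ≠ 0 := Function.ne_iff.1 hphat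
  have : Nonempty M := ⟨m₀⟩
  have hS : 0 < ∑ m, phat m ^ 2 :=
    sum_pos' (fun _ _ => sq_nonneg _) ⟨m₀, mem_univ _, by positivity⟩
  have hp := isJointPmf_uniform_mul hW hW1
  have second_moment : jointExpect (fun m c => (Fintype.card M : ℝ)⁻¹ * W m c)
      (fun m _ => (Fintype.card M * phat m) ^ 2) = Fintype.card M * ∑ m, phat m ^ 2 := by
    simp only [sq (_ * _), jointExpect_uniform_density_mul_fst hW1, mul_sum]
    exact sum_congr rfl fun m _ => by ring
  refine ⟨fun i => jointExpect (fun m c => (Fintype.card M : ℝ)⁻¹ * W m c)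
    fun _ c => if ftilde c = i then 1 else 0, fun i => ?_, fun f => ?_⟩
  · simp only [jointExpect_apply, mul_ite, mul_one, mul_zero]
  rw [tsum_fiber_sum_mul]
  have guess := abs_jointExpect_guess_sub_le hp (fun m => Fintype.card M * phat m) f ftilde
  rw [jointExpect_uniform_density_mul, jointExpect_uniform_density_mul_fst hW1,
    second_moment, mul_comm (maxCorr _)] at guess
  exact guess.trans (mul_le_mul
    (sqrt_mul_le_two_rpow (Nat.cast_pos.2 Fintype.card_pos) hS ht) hρ (maxCorr_nonneg hp.nonneg)
    (by positivity))

theorem stmt18 (n : ℕ) {C K : Type*} [Fintype C] [Fintype K] [Nonempty K]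
    (E : K → Fin (2 ^ n) → C) (ρ : ℝ)
    (hρ : maxCorr (fun (m : Fin (2 ^ n)) (c : C) =>
        ((2 ^ n : ℝ))⁻¹ * ((Fintype.card K : ℝ))⁻¹ *
          ((univ.filter fun k => E k m = c).card : ℝ)) ≤ ρ)
    (phat : Fin (2 ^ n) → ℝ) (hphat : ∀ m, 0 ≤ phat m) (hphat1 : ∑ m, phat m = 1)
    (t : ℝ) (ht : t ≤ -Real.logb 2 (∑ m, (phat m) ^ 2))
    (ftilde : C → ℕ) :
    ∃ q : ℕ → ℝ,
      (∀ i, q i = ∑ m, ∑ c, (if ftilde c = i then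
          ((2 ^ n : ℝ))⁻¹ * ((Fintype.card K : ℝ))⁻¹ *
            ((univ.filter fun k => E k m = c).card : ℝ) else 0)) ∧
      ∀ f : Fin (2 ^ n) → ℕ,
        |(∑ m, ∑ c, phat m * (((Fintype.card K : ℝ))⁻¹ *
            ((univ.filter fun k => E k m = c).card : ℝ)) *
            (if f m = ftilde c then 1 else 0)) -
          ∑' i : ℕ, (∑ m, if f m = i then phat m else 0) * q i| ≤
        (2 : ℝ) ^ (((n : ℝ) - t) / 2) * ρ := by
  have hphat0 : phat ≠ 0 := by
    rintro rfl
    simp at hphat1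
  simpa [cipherChannel, mul_assoc, Real.logb_pow] using
    stmt18_general (cipherChannel_nonneg E) (sum_cipherChannel E) ρ
      (by simpa [cipherChannel, mul_assoc] using hρ) phat hphat0 t ht ftilde
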